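/- With λ = 1, the sum of the inverse-Gram quadratic forms satisfies Σ_{k=1}^K φ^kᵀ (Λ^k)^{−1} φ^k ≤ 2 d log(K/d + 1). -/

import Mathlib

open Matrix

/-!
By the matrix determinant lemma, adding `v vᵀ` to the Gram matrix `A` multiplies `det A` by
`1 + v ⬝ᵥ A⁻¹ *ᵥ v`. The regularization keeps this quadratic form in `[0, 2]`, where
`x ≤ 2 log (1 + x)`, so it is at most twice the increment of `log det`, and the sum of these
increments telescopes. The final determinant is controlled by the trace, which grows at most
linearly in `K`, through the AM-GM inequality for the eigenvalues.
-/

theorem le_two_mul_log_one_add {x : ℝ} (h₀ : 0 ≤ x) (h₂ : x ≤ 2) : x ≤ 2 * Real.log (1 + x) := calc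
  x ≤ 2 * (2 * x / (x + 2)) := by
    rw [← mul_div_assoc, le_div_iff₀ (by positivity)]
    nlinarith
  _ ≤ 2 * Real.log (1 + x) := by gcongr; exact Real.le_log_one_add_of_nonneg h₀

section

variable {n : Type*} [DecidableEq n]

theorem posDef_of_posSemidef_sub_smul_one [Finite n] {A : Matrix n n ℝ} {c : ℝ} (hc : 0 < c)
    (hA : (A - c • (1 : Matrix n n ℝ)).PosSemidef) : A.PosDef := by
  simpa only [add_sub_cancel] using (PosDef.one.smul hc).add_posSemidef hA

variable [Fintype n]

theorem det_add_vecMulVec {R : Type*} [CommRing R] {A : Matrix n n R} (hA : IsUnit A.det)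
    (u v : n → R) : (A + vecMulVec u v).det = A.det * (1 + v ⬝ᵥ A⁻¹ *ᵥ u) := by
  rw [vecMulVec_eq Unit, det_add_replicateCol_mul_replicateRow hA, Matrix.mul_assoc,
    ← replicateCol_mulVec, det_one_add_mul_comm, det_one_add_replicateCol_mul_replicateRow]

theorem dotProduct_inv_mulVec_le_div {A : Matrix n n ℝ} {c : ℝ} (hc : 0 < c)
    (hA : (A - c • (1 : Matrix n n ℝ)).PosSemidef) (v : n → ℝ) :
    v ⬝ᵥ A⁻¹ *ᵥ v ≤ v ⬝ᵥ v / c := by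
  have hA_det : IsUnit A.det := (posDef_of_posSemidef_sub_smul_one hc hA).det_pos.ne'.isUnit
  set y := A⁻¹ *ᵥ v with hy
  have hAy : A *ᵥ y = v := by rw [hy, mulVec_mulVec, mul_nonsing_inv A hA_det, one_mulVec]
  have coercive : c * (y ⬝ᵥ y) ≤ v ⬝ᵥ y := by
    have h := hA.dotProduct_mulVec_nonneg y
    rw [star_trivial, sub_mulVec, hAy, smul_mulVec, one_mulVec, dotProduct_sub, dotProduct_smul,
      smul_eq_mul, dotProduct_comm y v] at h
    linarith
  have h_sq : 0 ≤ (v - c • y) ⬝ᵥ (v - c • y) := by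
    simpa using dotProduct_star_self_nonneg (v - c • y)
  have h_expand : (v - c • y) ⬝ᵥ (v - c • y) =
      v ⬝ᵥ v - 2 * c * (v ⬝ᵥ y) + c * (c * (y ⬝ᵥ y)) := by
    simp only [sub_dotProduct, dotProduct_sub, smul_dotProduct, dotProduct_smul, smul_eq_mul,
      dotProduct_comm y v]
    ring
  rw [le_div_iff₀ hc]
  linarith [mul_le_mul_of_nonneg_left coercive hc.le]

theorem dotProduct_inv_mulVec_le_two_mul_log_det_sub {A : Matrix n n ℝ} (hA : A.PosDef)
    {v : n → ℝ} (hv : v ⬝ᵥ A⁻¹ *ᵥ v ≤ 2) :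
    v ⬝ᵥ A⁻¹ *ᵥ v ≤ 2 * (Real.log (A + vecMulVec v v).det - Real.log A.det) := by
  have h₀ : 0 ≤ v ⬝ᵥ A⁻¹ *ᵥ v := by simpa using hA.inv.posSemidef.dotProduct_mulVec_nonneg v
  rw [det_add_vecMulVec hA.det_pos.ne'.isUnit, Real.log_mul hA.det_pos.ne' (by positivity),
    add_sub_cancel_left]
  exact le_two_mul_log_one_add h₀ hv

theorem det_le_trace_div_card_pow {A : Matrix n n ℝ} (hA : A.PosSemidef) :
    A.det ≤ (A.trace / Fintype.card n) ^ Fintype.card n := by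
  cases isEmpty_or_nonempty n
  · simp
  have amgm := Real.geom_mean_le_arith_mean Finset.univ (fun _ : n => 1) hA.1.eigenvalues
    (by simp) (by simp [Fintype.card_pos]) fun i _ => hA.eigenvalues_nonneg i
  have h_det : A.det = ∏ i, hA.1.eigenvalues i := by simpa using hA.1.det_eq_prod_eigenvalues
  have h_trace : A.trace = ∑ i, hA.1.eigenvalues i := by
    simpa using hA.1.trace_eq_sum_eigenvalues
  simp only [Real.rpow_one, one_mul, ← h_det, ← h_trace, Finset.sum_const, Finset.card_univ,
    nsmul_eq_mul, mul_one] at amgm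
  calc A.det = (A.det ^ (Fintype.card n : ℝ)⁻¹) ^ Fintype.card n :=
        (Real.rpow_inv_natCast_pow hA.det_nonneg Fintype.card_ne_zero).symm
    _ ≤ (A.trace / Fintype.card n) ^ Fintype.card n := by
        gcongr
        exact Real.rpow_nonneg hA.det_nonneg _

theorem log_det_le_card_mul_log_trace_div_card {A : Matrix n n ℝ} (hA : A.PosDef) :
    Real.log A.det ≤ Fintype.card n * Real.log (A.trace / Fintype.card n) := by
  rw [← Real.log_pow]
  exact Real.log_le_log hA.det_pos (det_le_trace_div_card_pow hA.posSemidef)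

end

section

variable {n : Type*} [DecidableEq n]

/-- The regularized Gram matrix `Λ^k = lam I + ∑_{τ=1}^{k-1} φ^τ (φ^τ)ᵀ` of a sequence of feature
vectors indexed from `1`. Because of the truncated subtraction, `Λ^0 = Λ^1 = lam I`. -/
def regularizedGram (lam : ℝ) (φ : ℕ → n → ℝ) (k : ℕ) : Matrix n n ℝ :=
  lam • (1 : Matrix n n ℝ) + ∑ τ ∈ Finset.Icc 1 (k - 1), vecMulVec (φ τ) (φ τ)

variable {lam : ℝ} (φ : ℕ → n → ℝ)

theorem regularizedGram_succ {k : ℕ} (hk : 1 ≤ k) :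
    regularizedGram lam φ (k + 1) = regularizedGram lam φ k + vecMulVec (φ k) (φ k) := by
  obtain ⟨m, rfl⟩ := Nat.exists_eq_add_of_le' hk
  simp only [regularizedGram, Nat.add_sub_cancel]
  rw [Finset.sum_Icc_succ_top (by lia), add_assoc]

theorem posSemidef_regularizedGram_sub_smul_one [Finite n] (k : ℕ) :
    (regularizedGram lam φ k - lam • (1 : Matrix n n ℝ)).PosSemidef := by
  rw [regularizedGram, add_sub_cancel_left]
  exact posSemidef_sum _ fun τ _ => posSemidef_vecMulVec_self_star (φ τ)

theorem posDef_regularizedGram [Finite n] (hlam : 0 < lam) (k : ℕ) :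
    (regularizedGram lam φ k).PosDef :=
  posDef_of_posSemidef_sub_smul_one hlam (posSemidef_regularizedGram_sub_smul_one φ k)

variable [Fintype n]

theorem det_regularizedGram_one : (regularizedGram lam φ 1).det = lam ^ Fintype.card n := by
  simp [regularizedGram]

theorem trace_regularizedGram_succ (K : ℕ) :
    (regularizedGram lam φ (K + 1)).trace =
      Fintype.card n * lam + ∑ τ ∈ Finset.Icc 1 K, φ τ ⬝ᵥ φ τ := by
  simp [regularizedGram, trace_sum, trace_vecMulVec, mul_comm]

theorem sum_dotProduct_inv_mulVec_le_two_mul_log_det_sub (hlam : 0 < lam) {K : ℕ}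
    (hφ : ∀ k ∈ Finset.Icc 1 K, φ k ⬝ᵥ φ k ≤ 2 * lam) :
    ∑ k ∈ Finset.Icc 1 K, φ k ⬝ᵥ (regularizedGram lam φ k)⁻¹ *ᵥ φ k ≤
      2 * (Real.log (regularizedGram lam φ (K + 1)).det -
        Real.log (regularizedGram lam φ 1).det) := by
  have increment : ∀ k ∈ Finset.Icc 1 K, φ k ⬝ᵥ (regularizedGram lam φ k)⁻¹ *ᵥ φ k ≤
      2 * (Real.log (regularizedGram lam φ (k + 1)).det -
        Real.log (regularizedGram lam φ k).det) := fun k hk => by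
    rw [regularizedGram_succ φ (Finset.mem_Icc.1 hk).1]
    refine dotProduct_inv_mulVec_le_two_mul_log_det_sub (posDef_regularizedGram φ hlam k) ?_
    exact (dotProduct_inv_mulVec_le_div hlam (posSemidef_regularizedGram_sub_smul_one φ k) _).trans
      ((div_le_iff₀ hlam).2 (hφ k hk))
  refine (Finset.sum_le_sum increment).trans_eq ?_
  rw [← Finset.mul_sum, ← Finset.Ico_add_one_right_eq_Icc,
    Finset.sum_Ico_sub (fun k => Real.log (regularizedGram lam φ k).det) (by lia)]

theorem log_det_regularizedGram_sub_le [Nonempty n] (hlam : 0 < lam) {b : ℝ} {K : ℕ}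
    (hφ : ∀ τ ∈ Finset.Icc 1 K, φ τ ⬝ᵥ φ τ ≤ b) :
    Real.log (regularizedGram lam φ (K + 1)).det - Real.log (regularizedGram lam φ 1).det ≤
      Fintype.card n * Real.log (K * b / (Fintype.card n * lam) + 1) := by
  have : (0 : ℝ) < Fintype.card n := mod_cast Fintype.card_pos
  have h_trace_pos : 0 < (regularizedGram lam φ (K + 1)).trace :=
    (posDef_regularizedGram φ hlam _).trace_pos
  have h_trace_le : (regularizedGram lam φ (K + 1)).trace ≤ Fintype.card n * lam + K * b := by
    rw [trace_regularizedGram_succ]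
    gcongr
    simpa using Finset.sum_le_card_nsmul _ _ _ hφ
  calc Real.log (regularizedGram lam φ (K + 1)).det - Real.log (regularizedGram lam φ 1).det
      ≤ Fintype.card n * Real.log ((regularizedGram lam φ (K + 1)).trace / Fintype.card n) -
          Fintype.card n * Real.log lam := by
        rw [det_regularizedGram_one, Real.log_pow]
        gcongr
        exact log_det_le_card_mul_log_trace_div_card (posDef_regularizedGram φ hlam _)
    _ = Fintype.card n *
          Real.log ((regularizedGram lam φ (K + 1)).trace / Fintype.card n / lam) := by
        rw [Real.log_div (by positivity) hlam.ne', mul_sub]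
    _ ≤ Fintype.card n * Real.log ((Fintype.card n * lam + K * b) / Fintype.card n / lam) := by
        gcongr
    _ = Fintype.card n * Real.log (K * b / (Fintype.card n * lam) + 1) := by
        congr 2
        field_simp
        ring

end

theorem stmt_6_general {n : Type*} [Fintype n] [DecidableEq n] [Nonempty n] {lam b : ℝ}
    (hlam : 0 < lam) (hb : b ≤ 2 * lam) (φ : ℕ → n → ℝ) {K : ℕ}
    (hφ : ∀ τ ∈ Finset.Icc 1 K, φ τ ⬝ᵥ φ τ ≤ b) :
    ∑ k ∈ Finset.Icc 1 K, φ k ⬝ᵥ (regularizedGram lam φ k)⁻¹ *ᵥ φ k ≤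
      2 * Fintype.card n * Real.log (K * b / (Fintype.card n * lam) + 1) := by
  have potential := sum_dotProduct_inv_mulVec_le_two_mul_log_det_sub φ hlam
    fun k hk => (hφ k hk).trans hb
  have growth := log_det_regularizedGram_sub_le φ hlam hφ
  linarith

/-- With `λ = 1`, `∑_{k=1}^K φ^kᵀ (Λ^k)⁻¹ φ^k ≤ 2 d log(K/d + 1)`,
where `Λ^k = I + ∑_{τ=1}^{k-1} φ^τ (φ^τ)ᵀ` and `‖φ^τ‖₂ ≤ 1`. -/
theorem stmt_6 (d K : ℕ) (hd : 1 ≤ d)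
    (φ : ℕ → Fin d → ℝ)
    (hφ : ∀ τ ∈ Finset.Icc 1 K, Real.sqrt (φ τ ⬝ᵥ φ τ) ≤ 1)
    (Λ : ℕ → Matrix (Fin d) (Fin d) ℝ)
    (hΛ : ∀ k, Λ k = (1 : Matrix (Fin d) (Fin d) ℝ) +
      ∑ τ ∈ Finset.Icc 1 (k - 1), Matrix.vecMulVec (φ τ) (φ τ)) :
    ∑ k ∈ Finset.Icc 1 K, φ k ⬝ᵥ (Λ k)⁻¹.mulVec (φ k) ≤
      2 * d * Real.log ((K : ℝ) / d + 1) := by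
  have : Nonempty (Fin d) := ⟨⟨0, hd⟩⟩
  have hΛ_eq : Λ = regularizedGram 1 φ := funext fun k => by rw [hΛ, regularizedGram, one_smul]
  simpa [hΛ_eq] using
    stmt_6_general one_pos (by norm_num) φ fun τ hτ => Real.sqrt_le_one.1 (hφ τ hτ)
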